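/- Fix q ∈ (0,8). Let Ω = ⋃_{0<x≤1/2} B(x, x/√2) ∪ ⋃_{1/2<x<1} B(x, (1−x)/√2), let Ell_q = {z ∈ ℂ : q(Re z − 1/2)² + (16−q)(Im z)² < 1}, and let Ω_q = (Ω ∩ {z : Re z < 1/4 or Re z > 3/4}) ∪ (Ω ∩ Ell_q). Then there is a constant C_q > 0 such that: every f : ℝ → ℂ that is infinitely differentiable on (0,1) and satisfies S := ∑_{n=0}^∞ (2^n/(2n+1)!) ∫_0^{1/2} x^{2n+1} (|f^{(n)}(x)|² + |f^{(n)}(1−x)|²) dx < ∞ (where f^{(n)} is the n-th derivative of f within (0,1)) admits a holomorphic extension F to Ω with F(x) = f(x) for x ∈ (0,1), and S ≥ C_q ∫_{Ω_q} |F(z)|² dA(z). -/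

import Mathlib

open MeasureTheory Set Metric
open scoped ENNReal NNReal

/-- The domain `Ω = ⋃_{0<x≤1/2} B(x, x/√2) ∪ ⋃_{1/2<x<1} B(x, (1-x)/√2)`. -/
def Omega : Set ℂ :=
  (⋃ x ∈ Ioc (0 : ℝ) (1 / 2), ball (x : ℂ) (x / Real.sqrt 2)) ∪
    ⋃ x ∈ Ioo (1 / 2 : ℝ) 1, ball (x : ℂ) ((1 - x) / Real.sqrt 2)

/-- The open ellipse `Ell_q = {z : q(Re z - 1/2)² + (16-q)(Im z)² < 1}`. -/
def EllQ (q : ℝ) : Set ℂ :=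
  {z : ℂ | q * (z.re - 1 / 2) ^ 2 + (16 - q) * z.im ^ 2 < 1}

/-- The domain `Ω_q = (Ω ∩ {Re z < 1/4 ∨ Re z > 3/4}) ∪ (Ω ∩ Ell_q)`. -/
def OmegaQ (q : ℝ) : Set ℂ :=
  (Omega ∩ {z : ℂ | z.re < 1 / 4 ∨ 3 / 4 < z.re}) ∪ (Omega ∩ EllQ q)

open Filter Topology

/-! The `n`-th term of `S` is a Taylor coefficient of `F` at `x`, weighted by a moment of the
kernel `1 / (π √(x² - 2|z - x|²))` on `ball x (x / √2)` (Parseval on circles and the substitution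
`√2 ρ = x sin t`), so the integrand of `S` at `x` is the integral of `|F|²` against that kernel.
Integrate in `x` and exchange the integrals: a point `z` collects the kernel over the centres
`x < 1 / 2` of the disks containing it. These centres form a chord `|x - 2 Re z| < R`, on which the
kernel is at least `1 / (π R)`; for `z` in the left half of `Ω_q` a fixed fraction of the chord lies
below `1 / 2`. The reflection `z ↦ 1 - z` gives the right half.

Conversely, finiteness of `S` bounds weighted `L²` norms of all derivatives of `f`, hence, by the
one-dimensional Sobolev inequality, the derivatives themselves. The Taylor series of `f` therefore
converge on the disks of `Ω`, and since these are centred on the real line they glue to `F`. -/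

/-! ### Moments of the arcsine weight -/

lemma integral_sin_pow_odd_zero_pi_div_two (n : ℕ) :
    ∫ t in (0 : ℝ)..(Real.pi / 2), Real.sin t ^ (2 * n + 1) =
      4 ^ n * (n.factorial : ℝ) ^ 2 / ((2 * n + 1).factorial : ℝ) := by
  induction n with
  | zero => simp
  | succ k ih =>
    rw [show 2 * (k + 1) + 1 = 2 * k + 1 + 2 by ring, integral_sin_pow, ih]
    simp only [Nat.factorial_succ, Real.sin_zero, Real.cos_pi_div_two]
    push_cast
    have := Nat.factorial_ne_zero k
    have := Nat.factorial_ne_zero (2 * k)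
    field_simp
    ring

lemma image_const_mul_sin_Ioo {r : ℝ} (hr : 0 < r) :
    (fun t => r * Real.sin t) '' Ioo 0 (Real.pi / 2) = Ioo 0 r := by
  ext y
  constructor
  · rintro ⟨t, ⟨ht₀, ht₁⟩, rfl⟩
    have hsin_pos : 0 < Real.sin t := Real.sin_pos_of_pos_of_lt_pi ht₀ (by linarith [Real.pi_pos])
    have hsin_lt : Real.sin t < 1 := by
      rw [← Real.sin_pi_div_two]
      exact Real.sin_lt_sin_of_lt_of_le_pi_div_two (by linarith) le_rfl ht₁
    exact ⟨mul_pos hr hsin_pos, mul_lt_of_lt_one_right hr hsin_lt⟩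
  · rintro ⟨hy₀, hyr⟩
    have hlt : y / r < 1 := (div_lt_one hr).2 hyr
    have hpos : 0 < y / r := div_pos hy₀ hr
    refine ⟨Real.arcsin (y / r), ⟨Real.arcsin_pos.2 hpos, Real.arcsin_lt_pi_div_two.2 hlt⟩, ?_⟩
    simp only [Real.sin_arcsin (by linarith) hlt.le]
    field_simp

lemma injOn_const_mul_sin_Ioo {r : ℝ} (hr : 0 < r) :
    InjOn (fun t => r * Real.sin t) (Ioo 0 (Real.pi / 2)) := by
  intro s hs t ht hst
  have hπ := Real.pi_pos
  exact Real.injOn_sin ⟨by linarith [hs.1], hs.2.le⟩ ⟨by linarith [ht.1], ht.2.le⟩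
    (mul_left_cancel₀ hr.ne' hst)

lemma abs_deriv_mul_pow_div_sqrt_sin {x t : ℝ} (hx : 0 < x) (ht : t ∈ Ioo 0 (Real.pi / 2))
    (n : ℕ) :
    |x / √2 * Real.cos t| *
        (2 * (x / √2 * Real.sin t) ^ (2 * n + 1) / √(x ^ 2 - 2 * (x / √2 * Real.sin t) ^ 2)) =
      x ^ (2 * n + 1) / 2 ^ n * Real.sin t ^ (2 * n + 1) := by
  have hsqrt : √2 ^ 2 = 2 := Real.sq_sqrt zero_le_two
  have hcos : 0 < Real.cos t :=
    Real.cos_pos_of_mem_Ioo ⟨by linarith [ht.1, Real.pi_pos], ht.2⟩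
  have hroot : x ^ 2 - 2 * (x / √2 * Real.sin t) ^ 2 = (x * Real.cos t) ^ 2 := by
    rw [mul_pow, div_pow, hsqrt, mul_pow, Real.cos_sq']
    ring
  have hpow : √2 ^ (2 * n) = 2 ^ n := by rw [pow_mul, hsqrt]
  rw [hroot, Real.sqrt_sq (by positivity), abs_of_pos (by positivity), mul_pow, div_pow,
    pow_succ √2, hpow]
  field_simp
  rw [hsqrt]

lemma lintegral_pow_div_sqrt {x : ℝ} (hx : 0 < x) (n : ℕ) :
    ∫⁻ ρ in Ioo 0 (x / √2), ENNReal.ofReal (2 * ρ ^ (2 * n + 1) / √(x ^ 2 - 2 * ρ ^ 2)) =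
      ENNReal.ofReal
        (2 ^ n * x ^ (2 * n + 1) * (n.factorial : ℝ) ^ 2 / ((2 * n + 1).factorial : ℝ)) := by
  have hr : 0 < x / √2 := by positivity
  have hpull : ∀ t ∈ Ioo 0 (Real.pi / 2),
      ENNReal.ofReal |x / √2 * Real.cos t| *
          ENNReal.ofReal (2 * (x / √2 * Real.sin t) ^ (2 * n + 1) /
            √(x ^ 2 - 2 * (x / √2 * Real.sin t) ^ 2)) =
        ENNReal.ofReal (x ^ (2 * n + 1) / 2 ^ n * Real.sin t ^ (2 * n + 1)) := fun t ht => by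
    rw [← ENNReal.ofReal_mul (abs_nonneg _), abs_deriv_mul_pow_div_sqrt_sin hx ht]
  have hint : IntegrableOn (fun t => x ^ (2 * n + 1) / 2 ^ n * Real.sin t ^ (2 * n + 1))
      (Ioo 0 (Real.pi / 2)) :=
    ((by fun_prop : Continuous _).integrableOn_Icc).mono_set Ioo_subset_Icc_self
  have hnonneg : ∀ᵐ t ∂volume.restrict (Ioo 0 (Real.pi / 2)),
      0 ≤ x ^ (2 * n + 1) / 2 ^ n * Real.sin t ^ (2 * n + 1) := by
    filter_upwards [ae_restrict_mem measurableSet_Ioo] with t ht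
    have := Real.sin_pos_of_pos_of_lt_pi ht.1 (by linarith [Real.pi_pos, ht.2])
    positivity
  rw [← image_const_mul_sin_Ioo hr,
    lintegral_image_eq_lintegral_abs_deriv_mul (f' := fun t => x / √2 * Real.cos t)
      measurableSet_Ioo (fun t _ => ((Real.hasDerivAt_sin t).const_mul _).hasDerivWithinAt)
      (injOn_const_mul_sin_Ioo hr),
    setLIntegral_congr_fun measurableSet_Ioo hpull,
    ← ofReal_integral_eq_lintegral_ofReal hint hnonneg, ← integral_Ioc_eq_integral_Ioo,
    ← intervalIntegral.integral_of_le (by positivity), intervalIntegral.integral_const_mul,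
    integral_sin_pow_odd_zero_pi_div_two, show (4 : ℝ) ^ n = 2 ^ n * 2 ^ n by
      rw [← mul_pow]; norm_num]
  congr 1
  field_simp

/-! ### Parseval on circles and disks -/

lemma ofReal_norm_sq {E : Type*} [SeminormedAddGroup E] (x : E) :
    ENNReal.ofReal (‖x‖ ^ 2) = ‖x‖ₑ ^ 2 := by
  rw [ENNReal.ofReal_pow (norm_nonneg x), ofReal_norm]

lemma lintegral_enorm_sq_eval_exp (p : Polynomial ℂ) :
    ∫⁻ θ in Ioo (-Real.pi) Real.pi, ‖p.eval (Complex.exp (θ * Complex.I))‖ₑ ^ 2 =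
      ENNReal.ofReal (2 * Real.pi) * ∑ n ∈ p.support, ‖p.coeff n‖ₑ ^ 2 := by
  have hcont : Continuous fun θ : ℝ => ‖p.eval (Complex.exp (θ * Complex.I))‖ ^ 2 := by fun_prop
  have hparseval : ∫ θ in (-Real.pi)..Real.pi, ‖p.eval (Complex.exp (θ * Complex.I))‖ ^ 2 =
      2 * Real.pi * ∑ n ∈ p.support, ‖p.coeff n‖ ^ 2 := by
    rw [p.sum_sq_norm_coeff_eq_circleAverage, Real.circleAverage_eq_integral_add (-Real.pi),
      intervalIntegral.integral_comp_add_right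
        (fun θ => ‖p.eval (circleMap 0 1 θ)‖ ^ 2)]
    rw [smul_eq_mul, mul_inv_cancel_left₀ (by positivity), zero_add,
      show 2 * Real.pi + -Real.pi = Real.pi by ring]
    simp only [circleMap, zero_add, Complex.ofReal_one, one_mul]
  simp_rw [← ofReal_norm_sq]
  rw [← ofReal_integral_eq_lintegral_ofReal
      (hcont.integrableOn_Icc.mono_set Ioo_subset_Icc_self) (ae_of_all _ fun _ => by positivity),
    ← integral_Ioc_eq_integral_Ioo, ← intervalIntegral.integral_of_le (by linarith [Real.pi_pos]),
    hparseval, ENNReal.ofReal_mul (by positivity),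
    ENNReal.ofReal_sum_of_nonneg fun _ _ => by positivity]

lemma lintegral_enorm_sq_le_tsum_of_hasSum_exp {c : ℕ → ℂ} {g : ℝ → ℂ}
    (hg : ∀ θ : ℝ, HasSum (fun n => c n * Complex.exp (θ * Complex.I) ^ n) (g θ)) :
    ∫⁻ θ in Ioo (-Real.pi) Real.pi, ‖g θ‖ₑ ^ 2 ≤
      ENNReal.ofReal (2 * Real.pi) * ∑' n, ‖c n‖ₑ ^ 2 := by
  set p : ℕ → Polynomial ℂ := fun N => ∑ n ∈ Finset.range N, Polynomial.monomial n (c n)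
  have heval (N : ℕ) (w : ℂ) : (p N).eval w = ∑ n ∈ Finset.range N, c n * w ^ n := by
    simp only [p, Polynomial.eval_finsetSum, Polynomial.eval_monomial]
  have hcoeff (N n : ℕ) : ‖(p N).coeff n‖ₑ ^ 2 ≤ ‖c n‖ₑ ^ 2 := by
    simp only [p, Polynomial.finsetSum_coeff, Polynomial.coeff_monomial, Finset.sum_ite_eq']
    split_ifs <;> simp
  have hliminf (θ : ℝ) : ‖g θ‖ₑ ^ 2 =
      liminf (fun N => ‖(p N).eval (Complex.exp (θ * Complex.I))‖ₑ ^ 2) atTop := by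
    simp_rw [heval]
    exact (((ENNReal.continuous_pow 2).tendsto _).comp
      (hg θ).tendsto_sum_nat.enorm).liminf_eq.symm
  simp_rw [hliminf]
  refine (lintegral_liminf_le' fun N => by fun_prop).trans
    (liminf_le_of_frequently_le' (Frequently.of_forall fun N => ?_))
  rw [lintegral_enorm_sq_eval_exp]
  gcongr
  exact (Finset.sum_le_sum fun n _ => hcoeff N n).trans (ENNReal.sum_le_tsum _)

lemma lintegral_circle_enorm_sq_le_tsum {ρ : ℝ} (hρ : 0 ≤ ρ) {a : ℕ → ℂ} {F : ℂ → ℂ}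
    (hF : ∀ θ : ℝ, HasSum (fun n => a n * (ρ * Complex.exp (θ * Complex.I)) ^ n)
      (F (ρ * Complex.exp (θ * Complex.I)))) :
    ENNReal.ofReal ρ *
        ∫⁻ θ in Ioo (-Real.pi) Real.pi, ‖F (ρ * Complex.exp (θ * Complex.I))‖ₑ ^ 2 ≤
      ∑' n, ENNReal.ofReal (2 * Real.pi * ρ ^ (2 * n + 1)) * ‖a n‖ₑ ^ 2 := by
  simp_rw [mul_pow, ← mul_assoc] at hF
  refine (mul_le_mul_right (lintegral_enorm_sq_le_tsum_of_hasSum_exp hF) _).trans_eq ?_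
  rw [← ENNReal.tsum_mul_left, ← ENNReal.tsum_mul_left]
  refine tsum_congr fun n => ?_
  have hcoeff : ‖a n * (ρ : ℂ) ^ n‖ₑ ^ 2 = ENNReal.ofReal (ρ ^ (2 * n)) * ‖a n‖ₑ ^ 2 := by
    rw [← ofReal_norm_sq, ← ofReal_norm_sq, ← ENNReal.ofReal_mul (by positivity), norm_mul,
      norm_pow, Complex.norm_of_nonneg hρ, mul_pow, ← pow_mul, mul_comm n 2, mul_comm]
  rw [hcoeff, ← mul_assoc, ← mul_assoc, ← ENNReal.ofReal_mul hρ,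
    ← ENNReal.ofReal_mul (by positivity)]
  congr 2
  ring

lemma lintegral_ball_radial_mul_enorm_sq_le {R : ℝ} {k : ℝ → ℝ} (hk : Measurable k) {a : ℕ → ℂ}
    {F : ℂ → ℂ} (hF : ∀ w ∈ ball (0 : ℂ) R, HasSum (fun n => a n * w ^ n) (F w)) :
    ∫⁻ w in ball (0 : ℂ) R, ENNReal.ofReal (k ‖w‖) * ‖F w‖ₑ ^ 2 ≤
      ∑' n, (∫⁻ ρ in Ioo 0 R,
        ENNReal.ofReal (k ρ) * ENNReal.ofReal (2 * Real.pi * ρ ^ (2 * n + 1))) * ‖a n‖ₑ ^ 2 := by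
  set G : ℂ → ℝ≥0∞ := (ball (0 : ℂ) R).indicator fun w => ENNReal.ofReal (k ‖w‖) * ‖F w‖ₑ ^ 2
  have hcircle : ∀ ρ ∈ Ioi (0 : ℝ),
      ∫⁻ θ in Ioo (-Real.pi) Real.pi, ENNReal.ofReal ρ • G (Complex.polarCoord.symm (ρ, θ)) ≤
        (Ioo 0 R).indicator (fun ρ => ∑' n, ENNReal.ofReal (k ρ) *
          ENNReal.ofReal (2 * Real.pi * ρ ^ (2 * n + 1)) * ‖a n‖ₑ ^ 2) ρ := by
    intro ρ (hρ : 0 < ρ)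
    have hsymm (θ : ℝ) : Complex.polarCoord.symm (ρ, θ) = ρ * Complex.exp (θ * Complex.I) := by
      simp [Complex.exp_mul_I]
    have hnorm (θ : ℝ) : ‖(ρ : ℂ) * Complex.exp (θ * Complex.I)‖ = ρ := by
      rw [norm_mul, Complex.norm_exp_ofReal_mul_I, Complex.norm_of_nonneg hρ.le, mul_one]
    rcases lt_or_ge ρ R with hρR | hρR
    · have hmem (θ : ℝ) : (ρ : ℂ) * Complex.exp (θ * Complex.I) ∈ ball 0 R := by
        rwa [mem_ball_zero_iff, hnorm]
      simp_rw [hsymm, G, indicator_of_mem (hmem _), hnorm, smul_eq_mul,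
        mul_left_comm (ENNReal.ofReal ρ)]
      rw [lintegral_const_mul' _ _ ENNReal.ofReal_ne_top,
        lintegral_const_mul' _ _ ENNReal.ofReal_ne_top, indicator_of_mem (mem_Ioo.2 ⟨hρ, hρR⟩)]
      simp_rw [mul_assoc (ENNReal.ofReal (k ρ)), ENNReal.tsum_mul_left]
      gcongr
      exact lintegral_circle_enorm_sq_le_tsum hρ.le fun θ => hF _ (hmem θ)
    · have hnot (θ : ℝ) : (ρ : ℂ) * Complex.exp (θ * Complex.I) ∉ ball 0 R := by
        rwa [mem_ball_zero_iff, hnorm, not_lt]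
      simp [hsymm, G, indicator_of_notMem (hnot _)]
  rw [← lintegral_indicator measurableSet_ball, ← Complex.lintegral_comp_polarCoord_symm]
  change ∫⁻ p in Ioi (0 : ℝ) ×ˢ Ioo (-Real.pi) Real.pi, _ ≤ _
  rw [Measure.volume_eq_prod, ← Measure.prod_restrict]
  refine (lintegral_prod_le _).trans ((setLIntegral_mono' measurableSet_Ioi hcircle).trans ?_)
  refine (setLIntegral_le_lintegral _ _).trans_eq ?_
  rw [lintegral_indicator measurableSet_Ioo, lintegral_tsum fun n => by fun_prop]
  exact tsum_congr fun n => lintegral_mul_const _ (by fun_prop)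

/-- The weight of the disk `ball x (x / √2)`, normalised so that integrating it against `|F|²` gives
`jetEnergy` of the derivatives of `F` at `x`. Off that disk the junk values `√t = 0` for `t < 0` and
`0⁻¹ = 0` make it vanish. -/
noncomputable def diskKernel (x : ℝ) (z : ℂ) : ℝ≥0∞ :=
  ENNReal.ofReal (Real.pi * √(x ^ 2 - 2 * ‖z - x‖ ^ 2))⁻¹

/-- The weighted sum `∑ₙ 2ⁿ x²ⁿ⁺¹ / (2n+1)! |dₙ|²` of a jet `d`, where `dₙ` plays the role of the
`n`-th derivative at the point `x`. -/
noncomputable def jetEnergy (d : ℕ → ℂ) (x : ℝ) : ℝ≥0∞ :=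
  ∑' n : ℕ, ENNReal.ofReal (2 ^ n / ((2 * n + 1).factorial : ℝ) * x ^ (2 * n + 1)) * ‖d n‖ₑ ^ 2

@[fun_prop]
lemma measurable_uncurry_diskKernel : Measurable (Function.uncurry diskKernel) := by
  unfold diskKernel Function.uncurry
  fun_prop

lemma diskKernel_eq_zero {x : ℝ} (hx : 0 < x) {z : ℂ} (hz : z ∉ ball (x : ℂ) (x / √2)) :
    diskKernel x z = 0 := by
  have hle : x / √2 ≤ ‖z - x‖ := by simpa [dist_eq_norm] using hz
  have hsq := pow_le_pow_left₀ (by positivity) hle 2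
  rw [div_pow, Real.sq_sqrt zero_le_two] at hsq
  simp [diskKernel, Real.sqrt_eq_zero_of_nonpos (by linarith : x ^ 2 - 2 * ‖z - x‖ ^ 2 ≤ 0)]

lemma lintegral_pi_mul_sqrt_inv_mul_pow {x : ℝ} (hx : 0 < x) (n : ℕ) :
    ∫⁻ ρ in Ioo 0 (x / √2), ENNReal.ofReal (Real.pi * √(x ^ 2 - 2 * ρ ^ 2))⁻¹ *
        ENNReal.ofReal (2 * Real.pi * ρ ^ (2 * n + 1)) =
      ENNReal.ofReal
        (2 ^ n * x ^ (2 * n + 1) * (n.factorial : ℝ) ^ 2 / ((2 * n + 1).factorial : ℝ)) := by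
  rw [← lintegral_pow_div_sqrt hx]
  refine lintegral_congr fun ρ => ?_
  rw [← ENNReal.ofReal_mul (by positivity), mul_inv]
  congr 1
  field_simp

lemma lintegral_diskKernel_mul_enorm_sq_le {x : ℝ} (hx : 0 < x) {d : ℕ → ℂ} {F : ℂ → ℂ}
    (hF : ∀ z ∈ ball (x : ℂ) (x / √2), HasSum (fun n => d n / n.factorial * (z - x) ^ n) (F z)) :
    ∫⁻ z, diskKernel x z * ‖F z‖ₑ ^ 2 ≤ jetEnergy d x := by
  have hsupport : Function.support (fun z => diskKernel x z * ‖F z‖ₑ ^ 2) ⊆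
      ball (x : ℂ) (x / √2) := fun z hz => by
    by_contra hmem
    exact hz (by simp [diskKernel_eq_zero hx hmem])
  have hF' : ∀ w ∈ ball (0 : ℂ) (x / √2),
      HasSum (fun n => d n / n.factorial * w ^ n) (F (w + x)) := fun w hw => by
    simpa using hF (w + x) (by simpa using hw)
  have hweight (n : ℕ) :
      ENNReal.ofReal (2 ^ n * x ^ (2 * n + 1) * (n.factorial : ℝ) ^ 2 /
          ((2 * n + 1).factorial : ℝ)) * ‖d n / n.factorial‖ₑ ^ 2 =
        ENNReal.ofReal (2 ^ n / ((2 * n + 1).factorial : ℝ) * x ^ (2 * n + 1)) * ‖d n‖ₑ ^ 2 := by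
    have hfac : (n.factorial : ℝ) ≠ 0 := by positivity
    rw [← ofReal_norm_sq, ← ofReal_norm_sq, ← ENNReal.ofReal_mul (by positivity),
      ← ENNReal.ofReal_mul (by positivity), norm_div, Complex.norm_natCast]
    congr 1
    field_simp
  calc ∫⁻ z, diskKernel x z * ‖F z‖ₑ ^ 2
    _ = ∫⁻ z in ball (x : ℂ) (x / √2), diskKernel x z * ‖F z‖ₑ ^ 2 :=
        (setLIntegral_eq_of_support_subset hsupport).symm
    _ = ∫⁻ w in ball (0 : ℂ) (x / √2),
          ENNReal.ofReal (Real.pi * √(x ^ 2 - 2 * ‖w‖ ^ 2))⁻¹ * ‖F (w + x)‖ₑ ^ 2 := by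
        rw [← lintegral_indicator measurableSet_ball, ← lintegral_indicator measurableSet_ball,
          ← lintegral_add_right_eq_self _ (x : ℂ)]
        refine lintegral_congr fun w => ?_
        simp [indicator, diskKernel]
    _ ≤ _ := lintegral_ball_radial_mul_enorm_sq_le
        (k := fun ρ => (Real.pi * √(x ^ 2 - 2 * ρ ^ 2))⁻¹) (by fun_prop) hF'
    _ = jetEnergy d x := by
        simp_rw [lintegral_pi_mul_sqrt_inv_mul_pow hx, hweight, jetEnergy]

lemma norm_sub_ofReal_sq (z : ℂ) (x : ℝ) : ‖z - x‖ ^ 2 = (z.re - x) ^ 2 + z.im ^ 2 := by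
  rw [← Complex.normSq_eq_norm_sq, Complex.normSq_apply]
  simp only [Complex.sub_re, Complex.ofReal_re, Complex.sub_im, Complex.ofReal_im, sub_zero]
  ring

-- The radicand of the kernel is `R² - (x - 2 Re z)²` with `R² = 2 (Re z)² - 2 (Im z)²`.
lemma ofReal_div_pi_le_lintegral_diskKernel {δ : ℝ} (hδ : δ ≤ 1) {z : ℂ} (hre : 0 < z.re)
    (him : z.im ^ 2 < z.re ^ 2)
    (h : 2 * z.re - 1 / 2 ≤ (1 - δ) * √(2 * z.re ^ 2 - 2 * z.im ^ 2)) :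
    ENNReal.ofReal (δ / Real.pi) ≤ ∫⁻ x in Ioo (0 : ℝ) (1 / 2), diskKernel x z := by
  set R := √(2 * z.re ^ 2 - 2 * z.im ^ 2)
  have hR_sq : R ^ 2 = 2 * z.re ^ 2 - 2 * z.im ^ 2 := Real.sq_sqrt (by linarith)
  have hR_pos : 0 < R := Real.sqrt_pos.2 (by linarith)
  have hR_lt : R < 2 * z.re := by nlinarith [sq_nonneg z.im]
  set I := Ioo (2 * z.re - R) (2 * z.re - (1 - δ) * R)
  have hI : I ⊆ Ioo 0 (1 / 2) := Ioo_subset_Ioo (by linarith) (by linarith)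
  have hlower : ∀ x ∈ I, ENNReal.ofReal (Real.pi * R)⁻¹ ≤ diskKernel x z := fun x hx => by
    have hradicand : x ^ 2 - 2 * ‖z - x‖ ^ 2 = R ^ 2 - (x - 2 * z.re) ^ 2 := by
      rw [norm_sub_ofReal_sq, hR_sq]
      ring
    have hdist : (x - 2 * z.re) ^ 2 < R ^ 2 := sq_lt_sq' (by linarith [hx.1]) (by nlinarith [hx.2])
    have hroot_pos : 0 < √(x ^ 2 - 2 * ‖z - x‖ ^ 2) := Real.sqrt_pos.2 (by linarith)
    have hroot_le : √(x ^ 2 - 2 * ‖z - x‖ ^ 2) ≤ R :=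
      (Real.sqrt_le_left hR_pos.le).2 (by linarith [sq_nonneg (x - 2 * z.re)])
    unfold diskKernel
    gcongr
  calc ENNReal.ofReal (δ / Real.pi)
    _ = ∫⁻ _ in I, ENNReal.ofReal (Real.pi * R)⁻¹ := by
        rw [setLIntegral_const, Real.volume_Ioo, ← ENNReal.ofReal_mul (by positivity)]
        congr 1
        field_simp
        ring
    _ ≤ ∫⁻ x in I, diskKernel x z := setLIntegral_mono' measurableSet_Ioo hlower
    _ ≤ ∫⁻ x in Ioo (0 : ℝ) (1 / 2), diskKernel x z := lintegral_mono_set hI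

/-- The fraction of the half-length `R` of the chord `{x : z ∈ ball x (x / √2)}` that is guaranteed
to lie below `x = 1 / 2`, uniformly over the left half of `OmegaQ q`. -/
noncomputable def chordFraction (q : ℝ) : ℝ := (8 - q) / (4 * (16 - q))

lemma chordFraction_pos {q : ℝ} (hq : q < 8) : 0 < chordFraction q :=
  div_pos (by linarith) (by linarith)

lemma chordFraction_le_quarter {q : ℝ} (hq : q < 8) : chordFraction q ≤ 1 / 4 := by
  rw [chordFraction, div_le_div_iff₀ (by linarith) (by norm_num)]
  linarith

lemma two_mul_sub_half_le_of_mem_EllQ {q a b : ℝ} (hq : q < 8) (ha : 1 / 4 ≤ a) (ha' : a ≤ 1 / 2)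
    (hell : q * (a - 1 / 2) ^ 2 + (16 - q) * b ^ 2 < 1) :
    2 * a - 1 / 2 ≤ (1 - chordFraction q) * √(2 * a ^ 2 - 2 * b ^ 2) := by
  set δ := chordFraction q
  have hδ_pos : 0 < δ := chordFraction_pos hq
  have hδ_le : δ ≤ 1 / 4 := chordFraction_le_quarter hq
  have hδ : 4 * δ * (16 - q) = 8 - q := by
    have : 16 - q ≠ 0 := by linarith
    simp only [δ, chordFraction]
    field_simp
  have hgap : (1 + 4 * δ) * (2 * a - 1 / 2) ^ 2 ≤ 2 * a ^ 2 - 2 * b ^ 2 := by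
    have hu : 0 ≤ (a - 1 / 4) * (1 / 2 - a) := mul_nonneg (by linarith) (by linarith)
    have : 0 < 16 - q := by linarith
    refine le_of_mul_le_mul_left ?_ this
    nlinarith [mul_nonneg (by linarith : 0 ≤ 8 - q) hu]
  have hfactor : 1 ≤ (1 - δ) ^ 2 * (1 + 4 * δ) := by nlinarith [mul_pos hδ_pos hδ_pos]
  have hmul : (1 - δ) * √((1 + 4 * δ) * (2 * a - 1 / 2) ^ 2) =
      √((1 - δ) ^ 2 * (1 + 4 * δ)) * (2 * a - 1 / 2) := by
    rw [Real.sqrt_mul (by positivity), Real.sqrt_mul (by positivity),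
      Real.sqrt_sq (by linarith), Real.sqrt_sq (by linarith), mul_assoc]
  calc 2 * a - 1 / 2
    _ ≤ √((1 - δ) ^ 2 * (1 + 4 * δ)) * (2 * a - 1 / 2) :=
        le_mul_of_one_le_left (by linarith) (Real.one_le_sqrt.2 hfactor)
    _ = (1 - δ) * √((1 + 4 * δ) * (2 * a - 1 / 2) ^ 2) := hmul.symm
    _ ≤ (1 - δ) * √(2 * a ^ 2 - 2 * b ^ 2) := by
        gcongr
        linarith

/-- The radius of the disk centred at `c` in the union defining `Omega`. -/
noncomputable def discRadius (c : ℝ) : ℝ := min c (1 - c) / √2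

lemma discRadius_pos {c : ℝ} (hc : c ∈ Ioo (0 : ℝ) 1) : 0 < discRadius c :=
  div_pos (lt_min hc.1 (sub_pos.2 hc.2)) (by positivity)

lemma discRadius_one_sub (c : ℝ) : discRadius (1 - c) = discRadius c := by
  rw [discRadius, discRadius, sub_sub_cancel, min_comm]

lemma discRadius_of_le_half {c : ℝ} (hc : c ≤ 1 / 2) : discRadius c = c / √2 := by
  rw [discRadius, min_eq_left (by linarith)]

lemma mem_Omega_iff {z : ℂ} :
    z ∈ Omega ↔ ∃ c ∈ Ioo (0 : ℝ) 1, z ∈ ball (c : ℂ) (discRadius c) := by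
  have hright {c : ℝ} (hc : 1 / 2 < c) : discRadius c = (1 - c) / √2 := by
    rw [← discRadius_one_sub, discRadius_of_le_half (by linarith)]
  simp only [Omega, mem_union, mem_iUnion, exists_prop]
  constructor
  · rintro (⟨c, hc, hz⟩ | ⟨c, hc, hz⟩)
    · exact ⟨c, ⟨hc.1, by linarith [hc.2]⟩, by rwa [discRadius_of_le_half hc.2]⟩
    · exact ⟨c, ⟨by linarith [hc.1], hc.2⟩, by rwa [hright hc.1]⟩
  · rintro ⟨c, hc, hz⟩
    rcases le_or_gt c (1 / 2) with hle | hlt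
    · exact .inl ⟨c, ⟨hc.1, hle⟩, by rwa [discRadius_of_le_half hle] at hz⟩
    · exact .inr ⟨c, ⟨hlt, hc.2⟩, by rwa [hright hlt] at hz⟩

lemma isOpen_Omega : IsOpen Omega :=
  (isOpen_biUnion fun _ _ => isOpen_ball).union (isOpen_biUnion fun _ _ => isOpen_ball)

lemma isOpen_OmegaQ (q : ℝ) : IsOpen (OmegaQ q) := by
  have hstrip : IsOpen {z : ℂ | z.re < 1 / 4 ∨ 3 / 4 < z.re} :=
    (isOpen_lt Complex.continuous_re continuous_const).union
      (isOpen_lt continuous_const Complex.continuous_re)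
  exact (isOpen_Omega.inter hstrip).union
    (isOpen_Omega.inter (isOpen_lt (by fun_prop) continuous_const))

lemma OmegaQ_subset_Omega (q : ℝ) : OmegaQ q ⊆ Omega :=
  union_subset inter_subset_left inter_subset_left

lemma one_sub_mem_Omega {z : ℂ} (hz : z ∈ Omega) : 1 - z ∈ Omega := by
  obtain ⟨c, hc, hzc⟩ := mem_Omega_iff.1 hz
  refine mem_Omega_iff.2 ⟨1 - c, ⟨by linarith [hc.2], by linarith [hc.1]⟩, ?_⟩
  rwa [discRadius_one_sub, Complex.ofReal_sub, Complex.ofReal_one, mem_ball, dist_sub_left]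

lemma one_sub_mem_OmegaQ {q : ℝ} {z : ℂ} (hz : z ∈ OmegaQ q) : 1 - z ∈ OmegaQ q := by
  rcases hz with ⟨hz, hre⟩ | ⟨hz, hell⟩
  · refine .inl ⟨one_sub_mem_Omega hz, ?_⟩
    simp only [mem_ofPred_eq, Complex.sub_re, Complex.one_re] at hre ⊢
    exact hre.symm.imp (by intro; linarith) (by intro; linarith)
  · refine .inr ⟨one_sub_mem_Omega hz, ?_⟩
    simp only [EllQ, mem_ofPred_eq, Complex.sub_re, Complex.one_re, Complex.sub_im,
      Complex.one_im] at hell ⊢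
    linarith

lemma re_pos_and_im_sq_lt_of_mem_Omega {z : ℂ} (hz : z ∈ Omega) :
    0 < z.re ∧ z.im ^ 2 < z.re ^ 2 := by
  obtain ⟨c, hc, hzc⟩ := mem_Omega_iff.1 hz
  have hlt : ‖z - c‖ ^ 2 < (c / √2) ^ 2 := by
    rw [mem_ball, dist_eq_norm] at hzc
    have : min c (1 - c) ≤ c := min_le_left _ _
    gcongr
    exact hzc.trans_le (by unfold discRadius; gcongr)
  rw [norm_sub_ofReal_sq, div_pow, Real.sq_sqrt zero_le_two] at hlt
  constructor
  · by_contra hre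
    nlinarith [sq_nonneg z.im, hc.1]
  · nlinarith [sq_nonneg (c - 2 * z.re)]

lemma le_lintegral_diskKernel_of_mem_OmegaQ {q : ℝ} (hq : q < 8) {z : ℂ} (hz : z ∈ OmegaQ q)
    (hre : z.re ≤ 1 / 2) :
    ENNReal.ofReal (chordFraction q / Real.pi) ≤
      ∫⁻ x in Ioo (0 : ℝ) (1 / 2), diskKernel x z := by
  have hδ := chordFraction_le_quarter hq
  obtain ⟨hre_pos, him⟩ := re_pos_and_im_sq_lt_of_mem_Omega (OmegaQ_subset_Omega q hz)
  refine ofReal_div_pi_le_lintegral_diskKernel (by linarith) hre_pos him ?_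
  rcases lt_or_ge z.re (1 / 4) with hlt | hge
  · have : 0 ≤ (1 - chordFraction q) * √(2 * z.re ^ 2 - 2 * z.im ^ 2) :=
      mul_nonneg (by linarith) (Real.sqrt_nonneg _)
    linarith
  · rcases hz with ⟨-, hlt | hgt⟩ | ⟨-, hell⟩
    · exact absurd hlt (not_lt.2 hge)
    · linarith
    · exact two_mul_sub_half_le_of_mem_EllQ hq hge hre hell

lemma mul_setLIntegral_le_lintegral_lintegral {α β : Type*} [MeasurableSpace α]
    [MeasurableSpace β] {μ : Measure α} {ν : Measure β} [SFinite μ] [SFinite ν]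
    {K : β → α → ℝ≥0∞} (hK : Measurable (Function.uncurry K)) {s : Set α} (hs : MeasurableSet s)
    {φ : α → ℝ≥0∞} (hφ : AEMeasurable φ (μ.restrict s)) {c : ℝ≥0∞}
    (hc : ∀ a ∈ s, c ≤ ∫⁻ b, K b a ∂ν) :
    c * ∫⁻ a in s, φ a ∂μ ≤ ∫⁻ b, ∫⁻ a, K b a * φ a ∂μ ∂ν :=
  calc c * ∫⁻ a in s, φ a ∂μ
    _ = ∫⁻ a in s, c * φ a ∂μ := (lintegral_const_mul'' c hφ).symm
    _ ≤ ∫⁻ a in s, (∫⁻ b, K b a ∂ν) * φ a ∂μ :=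
        setLIntegral_mono' hs fun a ha => by gcongr; exact hc a ha
    _ = ∫⁻ a in s, ∫⁻ b, K b a * φ a ∂ν ∂μ :=
        lintegral_congr fun a => (lintegral_mul_const _ (by fun_prop)).symm
    _ = ∫⁻ b, ∫⁻ a in s, K b a * φ a ∂μ ∂ν :=
        lintegral_lintegral_swap
          ((hK.comp measurable_swap).aemeasurable.mul hφ.comp_fst)
    _ ≤ ∫⁻ b, ∫⁻ a, K b a * φ a ∂μ ∂ν :=
        lintegral_mono fun b => setLIntegral_le_lintegral _ _

lemma mul_lintegral_left_half_OmegaQ_le {q : ℝ} (hq : q < 8) {F : ℂ → ℂ}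
    (hF : ContinuousOn F (OmegaQ q)) {d : ℝ → ℕ → ℂ}
    (hd : ∀ x ∈ Ioo (0 : ℝ) (1 / 2), ∀ z ∈ ball (x : ℂ) (x / √2),
      HasSum (fun n => d x n / n.factorial * (z - x) ^ n) (F z)) :
    ENNReal.ofReal (chordFraction q / Real.pi) *
        ∫⁻ z in OmegaQ q ∩ {z | z.re ≤ 1 / 2}, ‖F z‖ₑ ^ 2 ≤
      ∫⁻ x in Ioo (0 : ℝ) (1 / 2), jetEnergy (d x) x := by
  have hmeas : MeasurableSet (OmegaQ q ∩ {z | z.re ≤ 1 / 2}) :=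
    (isOpen_OmegaQ q).measurableSet.inter
      (measurableSet_le Complex.measurable_re measurable_const)
  refine (mul_setLIntegral_le_lintegral_lintegral measurable_uncurry_diskKernel hmeas
    (((hF.mono inter_subset_left).aemeasurable hmeas).enorm.pow_const 2)
    fun z hz => le_lintegral_diskKernel_of_mem_OmegaQ hq hz.1 hz.2).trans ?_
  exact setLIntegral_mono' measurableSet_Ioo fun x hx =>
    lintegral_diskKernel_mul_enorm_sq_le hx.1 (hd x hx)

lemma jetEnergy_neg_one_pow_mul (d : ℕ → ℂ) (x : ℝ) :
    jetEnergy (fun n => (-1) ^ n * d n) x = jetEnergy d x := by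
  simp only [jetEnergy, enorm_mul, enorm_pow, enorm_neg, enorm_one, one_pow, one_mul]

lemma setLIntegral_OmegaQ_inter_half_le_re (q : ℝ) (φ : ℂ → ℝ≥0∞) :
    ∫⁻ z in OmegaQ q ∩ {z | 1 / 2 ≤ z.re}, φ z =
      ∫⁻ z in OmegaQ q ∩ {z | z.re ≤ 1 / 2}, φ (1 - z) := by
  have hpre : OmegaQ q ∩ {z | z.re ≤ 1 / 2} =
      (1 - ·) ⁻¹' (OmegaQ q ∩ {z | 1 / 2 ≤ z.re}) := by
    ext z
    have hsymm : 1 - z ∈ OmegaQ q ↔ z ∈ OmegaQ q :=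
      ⟨fun h => by simpa using one_sub_mem_OmegaQ h, one_sub_mem_OmegaQ⟩
    simp only [mem_inter_iff, mem_preimage, mem_ofPred_eq, hsymm, Complex.sub_re, Complex.one_re]
    exact and_congr_right fun _ => ⟨fun _ => by linarith, fun _ => by linarith⟩
  rw [hpre, (volume.measurePreserving_sub_left (1 : ℂ)).setLIntegral_comp_preimage_emb
    (measurableEmbedding_subLeft 1)]

/-- The sum `S` of the theorem for a sequence `D` of functions on `(0, 1)`, where `D n` plays the
role of the `n`-th derivative, with summation and integration interchanged; see
`ahsSum_eq_tsum`. -/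
noncomputable def ahsSum (D : ℕ → ℝ → ℂ) : ℝ≥0∞ :=
  ∫⁻ x in Ioo (0 : ℝ) (1 / 2), (jetEnergy (D · x) x + jetEnergy (D · (1 - x)) x)

lemma mul_lintegral_OmegaQ_le {q : ℝ} (hq : q < 8) {F : ℂ → ℂ} (hF : ContinuousOn F Omega)
    {D : ℕ → ℝ → ℂ}
    (hD : ∀ c ∈ Ioo (0 : ℝ) 1, ∀ z ∈ ball (c : ℂ) (discRadius c),
      HasSum (fun n => D n c / n.factorial * (z - c) ^ n) (F z)) :
    ENNReal.ofReal (chordFraction q / Real.pi) * ∫⁻ z in OmegaQ q, ‖F z‖ₑ ^ 2 ≤ ahsSum D := by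
  have hF' : ContinuousOn F (OmegaQ q) := hF.mono (OmegaQ_subset_Omega q)
  have hleft := mul_lintegral_left_half_OmegaQ_le hq hF' (d := fun x n => D n x)
    fun x hx z hz => hD x ⟨hx.1, by linarith [hx.2]⟩ z (by rwa [discRadius_of_le_half hx.2.le])
  have hright := mul_lintegral_left_half_OmegaQ_le hq (F := fun z => F (1 - z))
    (d := fun x n => (-1) ^ n * D n (1 - x))
    (hF'.comp (by fun_prop) fun z => one_sub_mem_OmegaQ) fun x hx z hz => by
      have hmem : 1 - z ∈ ball ((1 - x : ℝ) : ℂ) (discRadius (1 - x)) := by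
        rwa [discRadius_one_sub, discRadius_of_le_half hx.2.le, Complex.ofReal_sub,
          Complex.ofReal_one, mem_ball, dist_sub_left]
      convert hD (1 - x) ⟨by linarith [hx.2], by linarith [hx.1]⟩ _ hmem using 2 with n
      rw [Complex.ofReal_sub, Complex.ofReal_one, show 1 - z - (1 - x) = -1 * (z - x) by ring,
        mul_pow]
      ring
  have hcover : OmegaQ q ⊆ OmegaQ q ∩ {z | z.re ≤ 1 / 2} ∪ OmegaQ q ∩ {z | 1 / 2 ≤ z.re} :=
    fun z hz => (le_total z.re (1 / 2)).imp (.intro hz) (.intro hz)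
  simp_rw [jetEnergy_neg_one_pow_mul] at hright
  rw [← setLIntegral_OmegaQ_inter_half_le_re q fun z => ‖F z‖ₑ ^ 2] at hright
  refine le_trans ?_ ((add_le_add hleft hright).trans (le_lintegral_add _ _))
  rw [← mul_add]
  gcongr
  exact (lintegral_mono_set hcover).trans (lintegral_union_le _ _ _)

/-! ### Derivative bounds from `L²` bounds -/

section Sobolev

variable {E : Type*} [NormedAddCommGroup E] [InnerProductSpace ℝ E] {g g' : ℝ → E} {a b : ℝ}

lemma enorm_two_mul_inner_le (u v : E) : ‖2 * inner ℝ u v‖ₑ ≤ ‖u‖ₑ ^ 2 + ‖v‖ₑ ^ 2 := by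
  rw [← ofReal_norm_sq, ← ofReal_norm_sq, ← ENNReal.ofReal_add (by positivity) (by positivity),
    ← ofReal_norm]
  refine ENNReal.ofReal_le_ofReal ?_
  rw [norm_mul, Real.norm_ofNat]
  linarith [norm_inner_le_norm (𝕜 := ℝ) u v, two_mul_le_add_sq ‖u‖ ‖v‖]

lemma enorm_sq_le_enorm_sq_add_lintegral (hg : ∀ x ∈ Ioo a b, HasDerivAt g (g' x) x)
    (hg' : ContinuousOn g' (Ioo a b)) {s t : ℝ} (hs : s ∈ Ioo a b) (ht : t ∈ Ioo a b) :
    ‖g t‖ₑ ^ 2 ≤ ‖g s‖ₑ ^ 2 + ∫⁻ x in Ioo a b, (‖g x‖ₑ ^ 2 + ‖g' x‖ₑ ^ 2) := by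
  have hsub : uIcc s t ⊆ Ioo a b := ordConnected_Ioo.uIcc_subset hs ht
  have hcont : ContinuousOn (fun x => 2 * inner ℝ (g x) (g' x)) (uIcc s t) :=
    continuousOn_const.mul ((continuousOn_of_forall_continuousAt fun x hx =>
      (hg x (hsub hx)).continuousAt).inner (hg'.mono hsub))
  have hftc : ∫ x in s..t, 2 * inner ℝ (g x) (g' x) = ‖g t‖ ^ 2 - ‖g s‖ ^ 2 :=
    intervalIntegral.integral_eq_sub_of_hasDerivAt (fun x hx => (hg x (hsub hx)).norm_sq)
      hcont.intervalIntegrable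
  have hle : ENNReal.ofReal (‖g t‖ ^ 2 - ‖g s‖ ^ 2) ≤
      ∫⁻ x in Ioo a b, (‖g x‖ₑ ^ 2 + ‖g' x‖ₑ ^ 2) := by
    rw [← hftc]
    calc ENNReal.ofReal (∫ x in s..t, 2 * inner ℝ (g x) (g' x))
      _ ≤ ‖∫ x in s..t, 2 * inner ℝ (g x) (g' x)‖ₑ := by
          rw [← ofReal_norm]
          exact ENNReal.ofReal_le_ofReal (Real.le_norm_self _)
      _ = ‖∫ x in uIoc s t, 2 * inner ℝ (g x) (g' x)‖ₑ := by
          rw [← ofReal_norm, ← ofReal_norm, intervalIntegral.norm_intervalIntegral_eq]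
      _ ≤ ∫⁻ x in uIoc s t, ‖2 * inner ℝ (g x) (g' x)‖ₑ := enorm_integral_le_lintegral_enorm _
      _ ≤ ∫⁻ x in uIoc s t, (‖g x‖ₑ ^ 2 + ‖g' x‖ₑ ^ 2) :=
          lintegral_mono fun x => enorm_two_mul_inner_le _ _
      _ ≤ ∫⁻ x in Ioo a b, (‖g x‖ₑ ^ 2 + ‖g' x‖ₑ ^ 2) :=
          lintegral_mono_set (uIoc_subset_uIcc.trans hsub)
  calc ‖g t‖ₑ ^ 2
    _ = ENNReal.ofReal (‖g s‖ ^ 2 + (‖g t‖ ^ 2 - ‖g s‖ ^ 2)) := by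
        rw [add_sub_cancel, ofReal_norm_sq]
    _ ≤ ENNReal.ofReal (‖g s‖ ^ 2) + ENNReal.ofReal (‖g t‖ ^ 2 - ‖g s‖ ^ 2) :=
        ENNReal.ofReal_add_le
    _ ≤ _ := by
        rw [ofReal_norm_sq]
        gcongr

lemma ofReal_sub_mul_enorm_sq_le (hg : ∀ x ∈ Ioo a b, HasDerivAt g (g' x) x)
    (hg' : ContinuousOn g' (Ioo a b)) {t : ℝ} (ht : t ∈ Ioo a b) :
    ENNReal.ofReal (b - a) * ‖g t‖ₑ ^ 2 ≤ (∫⁻ x in Ioo a b, ‖g x‖ₑ ^ 2) +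
      ENNReal.ofReal (b - a) * ∫⁻ x in Ioo a b, (‖g x‖ₑ ^ 2 + ‖g' x‖ₑ ^ 2) := by
  have hvol (c : ℝ≥0∞) : ∫⁻ _ in Ioo a b, c = ENNReal.ofReal (b - a) * c := by
    rw [setLIntegral_const, Real.volume_Ioo, mul_comm]
  rw [← hvol, ← hvol, ← lintegral_add_right _ measurable_const]
  exact setLIntegral_mono' measurableSet_Ioo fun s hs =>
    enorm_sq_le_enorm_sq_add_lintegral hg hg' hs ht

lemma sub_mul_norm_sq_le (hg : ∀ x ∈ Ioo a b, HasDerivAt g (g' x) x)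
    (hg' : ContinuousOn g' (Ioo a b)) {M M' : ℝ} (hM : 0 ≤ M) (hM' : 0 ≤ M')
    (hgM : ∫⁻ x in Ioo a b, ‖g x‖ₑ ^ 2 ≤ ENNReal.ofReal M)
    (hgM' : ∫⁻ x in Ioo a b, ‖g' x‖ₑ ^ 2 ≤ ENNReal.ofReal M') {t : ℝ} (ht : t ∈ Ioo a b) :
    (b - a) * ‖g t‖ ^ 2 ≤ M + (b - a) * (M + M') := by
  have hba : 0 ≤ b - a := by linarith [ht.1, ht.2]
  have hmeas : AEMeasurable (fun x => ‖g' x‖ₑ ^ 2) (volume.restrict (Ioo a b)) :=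
    (hg'.aestronglyMeasurable measurableSet_Ioo).enorm.pow_const 2
  have h := ofReal_sub_mul_enorm_sq_le hg hg' ht
  rw [lintegral_add_right' _ hmeas, ← ofReal_norm_sq, ← ENNReal.ofReal_mul hba] at h
  rw [← ENNReal.ofReal_le_ofReal_iff (by positivity), ENNReal.ofReal_add hM (by positivity),
    ENNReal.ofReal_mul hba (q := M + M'), ENNReal.ofReal_add hM hM']
  exact h.trans (by gcongr)

end Sobolev

lemma exists_forall_succ_pow_mul_pow_le (k : ℕ) {ρ : ℝ} (hρ₀ : 0 ≤ ρ) (hρ₁ : ρ < 1) :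
    ∃ T, ∀ n : ℕ, ((n : ℝ) + 1) ^ k * ρ ^ n ≤ T := by
  rcases hρ₀.eq_or_lt with rfl | hρ_pos
  · refine ⟨1, fun n => ?_⟩
    rcases n with _ | n <;> simp
  have hlim := ((tendsto_pow_const_mul_const_pow_of_lt_one k hρ₀ hρ₁).comp
    (tendsto_add_atTop_nat 1)).const_mul ρ⁻¹
  obtain ⟨T, hT⟩ := hlim.bddAbove_range
  refine ⟨T, fun n => le_of_eq_of_le ?_ (hT ⟨n, rfl⟩)⟩
  simp only [Function.comp_apply, pow_succ, Nat.cast_add, Nat.cast_one]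
  field_simp

lemma succ_mul_pow_mul_factorial_sq_le {κ : ℝ} (hκ : 0 ≤ κ) (n : ℕ) :
    (((n + 1 : ℕ) : ℝ) + 1) * κ ^ (n + 1) * ((n + 1).factorial : ℝ) ^ 2 ≤
      2 * κ * (n + 1) ^ 2 * ((n + 1) * κ ^ n * (n.factorial : ℝ) ^ 2) := by
  rw [Nat.factorial_succ, pow_succ]
  push_cast
  calc ((n : ℝ) + 1 + 1) * (κ ^ n * κ) * ((n + 1) * n.factorial) ^ 2
    _ ≤ (2 * (n + 1)) * (κ ^ n * κ) * ((n + 1) * n.factorial) ^ 2 := by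
        gcongr
        linarith [n.cast_nonneg (α := ℝ)]
    _ = 2 * κ * (n + 1) ^ 2 * ((n + 1) * κ ^ n * (n.factorial : ℝ) ^ 2) := by ring

section DerivativeChain

variable {E : Type*} [NormedAddCommGroup E] [InnerProductSpace ℝ E] {D : ℕ → ℝ → E} {a b : ℝ}

-- The polynomial losses in `n`, including those of the Sobolev inequality, are absorbed by the
-- geometric sequence `(κ r²)ⁿ`.
lemma exists_forall_norm_mul_pow_le_of_lintegral_le (hab : a < b)
    (hD : ∀ n, ∀ x ∈ Ioo a b, HasDerivAt (D n) (D (n + 1) x) x) {B κ r : ℝ} (hB : 0 ≤ B)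
    (hκ : 0 ≤ κ) (hL2 : ∀ n : ℕ, ∫⁻ t in Ioo a b, ‖D n t‖ₑ ^ 2 ≤
      ENNReal.ofReal (B * ((n + 1) * κ ^ n * (n.factorial : ℝ) ^ 2)))
    (hr : κ * r ^ 2 < 1) :
    ∃ A : ℝ, ∀ n, ∀ t ∈ Ioo a b, ‖D n t‖ * r ^ n ≤ A * n.factorial := by
  have hba : 0 < b - a := sub_pos.2 hab
  obtain ⟨T, hT⟩ := exists_forall_succ_pow_mul_pow_le 3 (by positivity) hr
  set L := B * (1 + (b - a) * (1 + 2 * κ)) / (b - a) with hL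
  have hcont (n : ℕ) : ContinuousOn (D n) (Ioo a b) := fun x hx =>
    (hD n x hx).continuousAt.continuousWithinAt
  have hsq (n : ℕ) {t : ℝ} (ht : t ∈ Ioo a b) :
      ‖D n t‖ ^ 2 ≤ L * ((n + 1) ^ 3 * κ ^ n) * (n.factorial : ℝ) ^ 2 := by
    set N := B * ((n + 1) * κ ^ n * (n.factorial : ℝ) ^ 2) with hN
    set N' := B * ((((n + 1 : ℕ) : ℝ) + 1) * κ ^ (n + 1) * ((n + 1).factorial : ℝ) ^ 2)
    have hnext : N' ≤ 2 * κ * (n + 1) ^ 2 * N :=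
      (mul_le_mul_of_nonneg_left (succ_mul_pow_mul_factorial_sq_le hκ n) hB).trans_eq (by ring)
    have hone : N ≤ (n + 1) ^ 2 * N :=
      le_mul_of_one_le_left (by positivity) (one_le_pow₀ (by linarith [n.cast_nonneg (α := ℝ)]))
    have hsobolev := sub_mul_norm_sq_le (hD n) (hcont (n + 1)) (by positivity) (by positivity)
      (hL2 n) (hL2 (n + 1)) ht
    refine le_of_mul_le_mul_left (hsobolev.trans ?_) hba
    calc N + (b - a) * (N + N')
      _ ≤ (n + 1) ^ 2 * N + (b - a) * ((n + 1) ^ 2 * N + 2 * κ * (n + 1) ^ 2 * N) := by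
          gcongr
      _ = (b - a) * (L * ((n + 1) ^ 3 * κ ^ n) * (n.factorial : ℝ) ^ 2) := by
          simp only [hL, hN]
          field_simp
  refine ⟨√(L * T), fun n t ht => ?_⟩
  rw [← Real.sqrt_sq (Nat.cast_nonneg n.factorial), ← Real.sqrt_mul' _ (by positivity)]
  refine Real.le_sqrt_of_sq_le ?_
  calc (‖D n t‖ * r ^ n) ^ 2
    _ = ‖D n t‖ ^ 2 * (r ^ 2) ^ n := by rw [mul_pow, ← pow_mul, ← pow_mul, mul_comm n]
    _ ≤ L * ((n + 1) ^ 3 * κ ^ n) * (n.factorial : ℝ) ^ 2 * (r ^ 2) ^ n := by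
        gcongr
        exact hsq n ht
    _ = L * ((n + 1) ^ 3 * (κ * r ^ 2) ^ n) * (n.factorial : ℝ) ^ 2 := by rw [mul_pow]; ring
    _ ≤ L * T * (n.factorial : ℝ) ^ 2 := by
        gcongr
        exact hT n

end DerivativeChain

lemma factorial_two_mul_add_one_le (n : ℕ) :
    ((2 * n + 1).factorial : ℝ) ≤ (2 * n + 1) * 4 ^ n * (n.factorial : ℝ) ^ 2 := by
  have hcentral : n.centralBinom * n.factorial ^ 2 = (2 * n).factorial := by
    rw [Nat.centralBinom_eq_two_mul_choose, sq, ← mul_assoc, two_mul]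
    exact Nat.add_choose_mul_factorial_mul_factorial n n
  rw [Nat.factorial_succ, ← hcentral]
  exact_mod_cast (Nat.mul_le_mul_left (2 * n + 1)
    (Nat.mul_le_mul_right (n.factorial ^ 2) n.centralBinom_le_four_pow)).trans_eq
      (mul_assoc _ _ _).symm

lemma lintegral_Ioo_le_lintegral_add_reflect (φ : ℝ → ℝ≥0∞) (a b : ℝ) :
    ∫⁻ x in Ioo a b, φ x ≤ ∫⁻ x in Ioo a ((a + b) / 2), (φ x + φ (a + b - x)) := by
  have hcover : Ioo a b ⊆ Ioc a ((a + b) / 2) ∪ Ico ((a + b) / 2) b := fun x hx =>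
    (le_total x ((a + b) / 2)).imp (.intro hx.1) (And.intro · hx.2)
  have hreflect : ∫⁻ x in Ico ((a + b) / 2) b, φ x =
      ∫⁻ x in Ioc a ((a + b) / 2), φ (a + b - x) := by
    have hpre : (a + b - ·) ⁻¹' Ico ((a + b) / 2) b = Ioc a ((a + b) / 2) := by
      rw [preimage_const_sub_Ico]
      congr 1 <;> ring
    rw [← hpre, (volume.measurePreserving_sub_left (a + b)).setLIntegral_comp_preimage_emb
      (measurableEmbedding_subLeft _)]
  calc ∫⁻ x in Ioo a b, φ x
    _ ≤ (∫⁻ x in Ioc a ((a + b) / 2), φ x) + ∫⁻ x in Ico ((a + b) / 2) b, φ x :=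
        (lintegral_mono_set hcover).trans (lintegral_union_le _ _ _)
    _ = (∫⁻ x in Ioo a ((a + b) / 2), φ x) + ∫⁻ x in Ioo a ((a + b) / 2), φ (a + b - x) := by
        rw [hreflect, setLIntegral_congr Ioo_ae_eq_Ioc, setLIntegral_congr Ioo_ae_eq_Ioc]
    _ ≤ _ := le_lintegral_add _ _

section AhsSum

variable {D : ℕ → ℝ → ℂ}

lemma ahsSum_eq_tsum (hD : ∀ n, ContinuousOn (D n) (Ioo 0 1)) :
    ahsSum D = ∑' n : ℕ, ENNReal.ofReal (2 ^ n / ((2 * n + 1).factorial : ℝ)) *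
      ∫⁻ x in Ioo (0 : ℝ) (1 / 2), ENNReal.ofReal (x ^ (2 * n + 1)) *
        (‖D n x‖ₑ ^ 2 + ‖D n (1 - x)‖ₑ ^ 2) := by
  have hmeas (n : ℕ) : AEMeasurable (fun x =>
      ENNReal.ofReal (2 ^ n / ((2 * n + 1).factorial : ℝ) * x ^ (2 * n + 1)) *
        (‖D n x‖ₑ ^ 2 + ‖D n (1 - x)‖ₑ ^ 2)) (volume.restrict (Ioo (0 : ℝ) (1 / 2))) := by
    have hleft : ContinuousOn (D n) (Ioo 0 (1 / 2)) :=
      (hD n).mono (Ioo_subset_Ioo_right (by norm_num))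
    have hright : ContinuousOn (fun x => D n (1 - x)) (Ioo 0 (1 / 2)) :=
      (hD n).comp (by fun_prop) fun x hx => ⟨by linarith [hx.2], by linarith [hx.1]⟩
    exact AEMeasurable.mul (by fun_prop)
      (((hleft.aemeasurable measurableSet_Ioo).enorm.pow_const 2).add
        ((hright.aemeasurable measurableSet_Ioo).enorm.pow_const 2))
  simp_rw [ahsSum, jetEnergy, ← ENNReal.tsum_add, ← mul_add]
  rw [lintegral_tsum hmeas]
  refine tsum_congr fun n => ?_
  simp_rw [ENNReal.ofReal_mul (show (0 : ℝ) ≤ 2 ^ n / ((2 * n + 1).factorial : ℝ) by positivity),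
    mul_assoc]
  exact lintegral_const_mul' _ _ ENNReal.ofReal_ne_top

lemma mul_lintegral_enorm_sq_le_ahsSum (D : ℕ → ℝ → ℂ) {ε : ℝ} (hε : 0 ≤ ε) (n : ℕ) :
    ENNReal.ofReal (2 ^ n / ((2 * n + 1).factorial : ℝ) * ε ^ (2 * n + 1)) *
      ∫⁻ x in Ioo ε (1 - ε), ‖D n x‖ₑ ^ 2 ≤ ahsSum D := by
  have hterm {x : ℝ} (hx : ε ≤ x) (d : ℕ → ℂ) :
      ENNReal.ofReal (2 ^ n / ((2 * n + 1).factorial : ℝ) * ε ^ (2 * n + 1)) * ‖d n‖ₑ ^ 2 ≤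
        jetEnergy d x := by
    refine le_trans ?_ (ENNReal.le_tsum n)
    gcongr
  calc ENNReal.ofReal (2 ^ n / ((2 * n + 1).factorial : ℝ) * ε ^ (2 * n + 1)) *
        ∫⁻ x in Ioo ε (1 - ε), ‖D n x‖ₑ ^ 2
    _ ≤ ENNReal.ofReal (2 ^ n / ((2 * n + 1).factorial : ℝ) * ε ^ (2 * n + 1)) *
        ∫⁻ x in Ioo ε (1 / 2), (‖D n x‖ₑ ^ 2 + ‖D n (1 - x)‖ₑ ^ 2) := by
        refine mul_le_mul_right ?_ _
        simpa only [add_sub_cancel] using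
          lintegral_Ioo_le_lintegral_add_reflect (fun x => ‖D n x‖ₑ ^ 2) ε (1 - ε)
    _ = ∫⁻ x in Ioo ε (1 / 2),
        ENNReal.ofReal (2 ^ n / ((2 * n + 1).factorial : ℝ) * ε ^ (2 * n + 1)) *
          (‖D n x‖ₑ ^ 2 + ‖D n (1 - x)‖ₑ ^ 2) :=
        (lintegral_const_mul' _ _ ENNReal.ofReal_ne_top).symm
    _ ≤ ∫⁻ x in Ioo ε (1 / 2), (jetEnergy (D · x) x + jetEnergy (D · (1 - x)) x) :=
        setLIntegral_mono' measurableSet_Ioo fun x hx => by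
          rw [mul_add]
          exact add_le_add (hterm hx.1.le (D · x)) (hterm hx.1.le (D · (1 - x)))
    _ ≤ ahsSum D := lintegral_mono_set (Ioo_subset_Ioo_left hε)

lemma lintegral_enorm_sq_le_of_ahsSum_ne_top (hS : ahsSum D ≠ ⊤) {ε : ℝ} (hε : 0 < ε) (n : ℕ) :
    ∫⁻ x in Ioo ε (1 - ε), ‖D n x‖ₑ ^ 2 ≤ ENNReal.ofReal
      (2 * (ahsSum D).toReal / ε * ((n + 1) * (2 / ε ^ 2) ^ n * (n.factorial : ℝ) ^ 2)) := by
  have hweight : 0 < 2 ^ n / ((2 * n + 1).factorial : ℝ) * ε ^ (2 * n + 1) := by positivity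
  have hreal : (ahsSum D).toReal / (2 ^ n / ((2 * n + 1).factorial : ℝ) * ε ^ (2 * n + 1)) ≤
      2 * (ahsSum D).toReal / ε * ((n + 1) * (2 / ε ^ 2) ^ n * (n.factorial : ℝ) ^ 2) := by
    calc (ahsSum D).toReal / (2 ^ n / ((2 * n + 1).factorial : ℝ) * ε ^ (2 * n + 1))
      _ = (ahsSum D).toReal / (2 ^ n * ε ^ (2 * n + 1)) * (2 * n + 1).factorial := by field_simp
      _ ≤ (ahsSum D).toReal / (2 ^ n * ε ^ (2 * n + 1)) *
          ((2 * (n + 1)) * 4 ^ n * (n.factorial : ℝ) ^ 2) := by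
          gcongr
          refine (factorial_two_mul_add_one_le n).trans ?_
          gcongr
          linarith
      _ = 2 * (ahsSum D).toReal / ε * ((n + 1) * (2 / ε ^ 2) ^ n * (n.factorial : ℝ) ^ 2) := by
          rw [show (4 : ℝ) = 2 * 2 by norm_num, mul_pow, div_pow, ← pow_mul]
          field_simp
          ring
  refine le_trans ?_ (ENNReal.ofReal_le_ofReal hreal)
  rw [ENNReal.ofReal_div_of_pos hweight, ENNReal.ofReal_toReal hS, ENNReal.le_div_iff_mul_le
    (.inl (ENNReal.ofReal_pos.2 hweight).ne') (.inl ENNReal.ofReal_ne_top), mul_comm]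
  exact mul_lintegral_enorm_sq_le_ahsSum D hε.le n

lemma exists_forall_norm_mul_pow_le_of_ahsSum_ne_top
    (hD : ∀ n, ∀ x ∈ Ioo (0 : ℝ) 1, HasDerivAt (D n) (D (n + 1) x) x) (hS : ahsSum D ≠ ⊤)
    {ε r : ℝ} (hε : 0 < ε) (hε' : ε < 1 / 2) (hr₀ : 0 ≤ r) (hr : r < ε / √2) :
    ∃ A : ℝ, ∀ n, ∀ t ∈ Ioo ε (1 - ε), ‖D n t‖ * r ^ n ≤ A * n.factorial := by
  refine exists_forall_norm_mul_pow_le_of_lintegral_le (by linarith)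
    (fun n x hx => hD n x (Ioo_subset_Ioo hε.le (by linarith) hx)) (by positivity) (by positivity)
    (lintegral_enorm_sq_le_of_ahsSum_ne_top hS hε) ?_
  have hsq : r ^ 2 < ε ^ 2 / 2 := by
    calc r ^ 2 < (ε / √2) ^ 2 := by gcongr
      _ = ε ^ 2 / 2 := by rw [div_pow, Real.sq_sqrt zero_le_two]
  rw [div_mul_eq_mul_div, div_lt_one (by positivity)]
  linarith

end AhsSum

/-! ### Taylor series and gluing -/

section Taylor

variable {E : Type*} [NormedAddCommGroup E] [NormedSpace ℝ E] {D : ℕ → ℝ → E}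

-- Differentiating the Taylor polynomial in its centre leaves only the last term of a telescoping
-- sum.
lemma hasDerivAt_sum_pow_smul {t : ℝ} (y : ℝ) (n : ℕ)
    (hD : ∀ k ≤ n, HasDerivAt (D k) (D (k + 1) t) t) :
    HasDerivAt (fun s => ∑ k ∈ Finset.range (n + 1), ((y - s) ^ k / k.factorial) • D k s)
      (((y - t) ^ n / n.factorial) • D (n + 1) t) t := by
  induction n with
  | zero => simpa using hD 0 le_rfl
  | succ n ih =>
    simp_rw [Finset.sum_range_succ _ (n + 1)]
    have hpow := (monomial_has_deriv_aux t y n).div_const ((n + 1).factorial : ℝ)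
    refine ((ih fun k hk => hD k (hk.trans n.le_succ)).add
      (hpow.smul (hD (n + 1) le_rfl))).congr_deriv ?_
    have hcoeff : -(n + 1 : ℝ) * (y - t) ^ n / ((n + 1).factorial : ℝ) =
        -((y - t) ^ n / n.factorial) := by
      rw [Nat.factorial_succ]
      push_cast
      field_simp
    rw [hcoeff, neg_smul]
    abel

lemma norm_sub_sum_pow_smul_le {J : Set ℝ} (hJ : Convex ℝ J)
    (hD : ∀ n, ∀ x ∈ J, HasDerivAt (D n) (D (n + 1) x) x) {n : ℕ} {M : ℝ}
    (hM : ∀ x ∈ J, ‖D (n + 1) x‖ ≤ M) {c y : ℝ} (hc : c ∈ J) (hy : y ∈ J) :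
    ‖D 0 y - ∑ k ∈ Finset.range (n + 1), ((y - c) ^ k / k.factorial) • D k c‖ ≤
      M * |y - c| ^ (n + 1) / n.factorial := by
  have hsub : uIcc c y ⊆ J := hJ.ordConnected.uIcc_subset hc hy
  have hderiv (t : ℝ) (ht : t ∈ uIcc c y) := hasDerivAt_sum_pow_smul y n fun k _ => hD k t (hsub ht)
  have hbound (t : ℝ) (ht : t ∈ uIcc c y) :
      ‖((y - t) ^ n / n.factorial) • D (n + 1) t‖ ≤ M * |y - c| ^ n / n.factorial := by
    rw [norm_smul, norm_div, norm_pow, Real.norm_natCast, Real.norm_eq_abs, mul_comm, mul_div_assoc]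
    have hyt : |y - t| ≤ |y - c| := abs_sub_right_of_mem_uIcc ht
    exact mul_le_mul (hM t (hsub ht)) (by gcongr) (by positivity)
      ((norm_nonneg _).trans (hM t (hsub ht)))
  have hself : ∑ k ∈ Finset.range (n + 1), ((y - y) ^ k / k.factorial) • D k y = D 0 y := by
    rw [Finset.sum_range_succ']
    simp
  have hmean := (convex_uIcc c y).norm_image_sub_le_of_norm_hasDerivWithin_le
    (fun t ht => (hderiv t ht).hasDerivWithinAt) hbound left_mem_uIcc right_mem_uIcc
  rw [hself, Real.norm_eq_abs] at hmean
  exact hmean.trans_eq (by ring)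

lemma tendsto_sum_pow_smul {J : Set ℝ} (hJ : Convex ℝ J)
    (hD : ∀ n, ∀ x ∈ J, HasDerivAt (D n) (D (n + 1) x) x) {A r : ℝ}
    (hA : ∀ n, ∀ x ∈ J, ‖D n x‖ * r ^ n ≤ A * n.factorial) {c y : ℝ} (hc : c ∈ J) (hy : y ∈ J)
    (hr : |y - c| < r) :
    Tendsto (fun n => ∑ k ∈ Finset.range n, ((y - c) ^ k / k.factorial) • D k c) atTop
      (𝓝 (D 0 y)) := by
  have hr₀ : 0 < r := (abs_nonneg _).trans_lt hr
  have hlim : Tendsto (fun n : ℕ => A * (((n + 1 : ℕ) : ℝ) * (|y - c| / r) ^ (n + 1))) atTop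
      (𝓝 0) := by
    simpa only [mul_zero, Function.comp_apply] using
      ((tendsto_self_mul_const_pow_of_lt_one (by positivity)
      ((div_lt_one hr₀).2 hr)).comp (tendsto_add_atTop_nat 1)).const_mul A
  rw [← tendsto_add_atTop_iff_nat 1, tendsto_iff_norm_sub_tendsto_zero]
  refine squeeze_zero (fun n => norm_nonneg _) (fun n => ?_) hlim
  have hM (x : ℝ) (hx : x ∈ J) : ‖D (n + 1) x‖ ≤ A * (n + 1).factorial / r ^ (n + 1) :=
    (le_div_iff₀ (by positivity)).2 (hA (n + 1) x hx)
  rw [norm_sub_rev]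
  refine (norm_sub_sum_pow_smul_le hJ hD hM hc hy).trans_eq ?_
  rw [Nat.factorial_succ, div_pow]
  push_cast
  field_simp

end Taylor

/-- The Taylor series at `c` whose `n`-th derivative at `c` is `d n`; junk where it diverges. -/
noncomputable def taylorSum (d : ℕ → ℂ) (c z : ℂ) : ℂ :=
  ∑' n, d n / n.factorial * (z - c) ^ n

lemma hasFPowerSeriesOnBall_taylorSum {d : ℕ → ℂ} {R : ℝ} (hR : 0 < R)
    (hd : ∀ r ∈ Ioo 0 R, ∃ A : ℝ, ∀ n, ‖d n‖ * r ^ n ≤ A * n.factorial) (c : ℂ) :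
    HasFPowerSeriesOnBall (taylorSum d c)
      (FormalMultilinearSeries.ofScalars ℂ fun n => d n / (n.factorial : ℂ)) c
      (ENNReal.ofReal R) := by
  set p := FormalMultilinearSeries.ofScalars ℂ fun n => d n / (n.factorial : ℂ) with hp
  have hsum : taylorSum d c = fun z => p.sum (z - c) := by
    ext z
    simp only [taylorSum, hp, FormalMultilinearSeries.sum,
      FormalMultilinearSeries.ofScalars_apply_eq, smul_eq_mul]
  have hradius : ENNReal.ofReal R ≤ p.radius := by
    refine ENNReal.le_of_forall_nnreal_lt fun r hr => ?_
    rcases eq_zero_or_pos r with rfl | hr₀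
    · exact zero_le
    obtain ⟨A, hA⟩ := hd r ⟨hr₀, by simpa using hr⟩
    refine p.le_radius_of_bound A fun n => ?_
    rw [hp, FormalMultilinearSeries.ofScalars_norm, norm_div, Complex.norm_natCast,
      div_mul_eq_mul_div, div_le_iff₀ (by positivity)]
    exact hA n
  have hpos : 0 < ENNReal.ofReal R := ENNReal.ofReal_pos.2 hR
  rw [hsum]
  simpa only [zero_add] using
    ((p.hasFPowerSeriesOnBall (hpos.trans_le hradius)).mono hpos hradius).comp_sub c

lemma hasSum_taylorSum {d : ℕ → ℂ} {R : ℝ}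
    (hd : ∀ r ∈ Ioo 0 R, ∃ A : ℝ, ∀ n, ‖d n‖ * r ^ n ≤ A * n.factorial) {c z : ℂ}
    (hz : z ∈ ball c R) : HasSum (fun n => d n / n.factorial * (z - c) ^ n) (taylorSum d c z) := by
  have hR : 0 < R := pos_of_mem_ball hz
  rw [← Metric.eball_ofReal] at hz
  simpa only [FormalMultilinearSeries.ofScalars_apply_eq, smul_eq_mul] using
    (hasFPowerSeriesOnBall_taylorSum hR hd c).hasSum_sub hz

lemma differentiableOn_taylorSum {d : ℕ → ℂ} {R : ℝ}
    (hd : ∀ r ∈ Ioo 0 R, ∃ A : ℝ, ∀ n, ‖d n‖ * r ^ n ≤ A * n.factorial) (c : ℂ) :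
    DifferentiableOn ℂ (taylorSum d c) (ball c R) := by
  rcases le_or_gt R 0 with hR | hR
  · rw [ball_eq_empty.2 hR]
    exact differentiableOn_empty
  · rw [← Metric.eball_ofReal]
    exact (hasFPowerSeriesOnBall_taylorSum hR hd c).differentiableOn

lemma analyticAt_comp_ofReal {G : ℂ → ℂ} {x : ℝ} (hG : AnalyticAt ℂ G x) :
    AnalyticAt ℝ (fun t : ℝ => G t) x :=
  (hG.restrictScalars (𝕜 := ℝ)).comp (Complex.ofRealCLM.analyticAt x)

lemma eqOn_of_eventually_eq_ofReal {G H : ℂ → ℂ} {U : Set ℂ} (hU : IsOpen U)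
    (hU' : IsPreconnected U) (hG : DifferentiableOn ℂ G U) (hH : DifferentiableOn ℂ H U) {x : ℝ}
    (hx : (x : ℂ) ∈ U) (heq : ∀ᶠ t : ℝ in 𝓝 x, G t = H t) : EqOn G H U := by
  have hreal : Tendsto (fun t : ℝ => (t : ℂ)) (𝓝[≠] x) (𝓝[≠] (x : ℂ)) :=
    Complex.continuous_ofReal.continuousAt.continuousWithinAt.tendsto_nhdsWithin
      fun t ht => by simpa using ht
  exact (hG.analyticOnNhd hU).eqOn_of_preconnected_of_frequently_eq (hH.analyticOnNhd hU) hU' hx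
    (hreal.frequently (heq.filter_mono nhdsWithin_le_nhds).frequently)

lemma re_mem_ball_of_mem_ball_ofReal {z : ℂ} {c r : ℝ} (hz : z ∈ ball (c : ℂ) r) :
    z.re ∈ ball c r := by
  rw [mem_ball, Complex.dist_eq] at hz
  rw [mem_ball, Real.dist_eq]
  simpa using (Complex.abs_re_le_norm (z - c)).trans_lt hz

section Gluing

variable {f : ℝ → ℂ} {I : Set ℝ} {r : ℝ → ℝ} {G : ℝ → ℂ → ℂ}

lemma eqOn_comp_ofReal_ball (hr : ∀ c ∈ I, 0 < r c) (hI : ∀ c ∈ I, ball c (r c) ⊆ I)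
    (hG : ∀ c ∈ I, DifferentiableOn ℂ (G c) (ball (c : ℂ) (r c)))
    (hGf : ∀ c ∈ I, ∀ᶠ t : ℝ in 𝓝 c, G c t = f t) {c : ℝ} (hc : c ∈ I) :
    EqOn (fun t : ℝ => G c t) f (ball c (r c)) := by
  have hG_an (x : ℝ) (hx : x ∈ I) {t : ℝ} (ht : t ∈ ball x (r x)) :
      AnalyticAt ℝ (fun s : ℝ => G x s) t :=
    analyticAt_comp_ofReal <| (hG x hx).analyticAt <|
      isOpen_ball.mem_nhds <| by rwa [mem_ball, Complex.isometry_ofReal.dist_eq]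
  have hf_an : AnalyticOnNhd ℝ f (ball c (r c)) := fun t ht =>
    (hG_an t (hI c hc ht) (mem_ball_self (hr t (hI c hc ht)))).congr (hGf t (hI c hc ht))
  exact AnalyticOnNhd.eqOn_of_preconnected_of_eventuallyEq (fun t => hG_an c hc) hf_an
    (convex_ball c (r c)).isPreconnected (mem_ball_self (hr c hc)) (hGf c hc)

-- Any two of the disks are centred on the real line, so if they meet then they meet on it, where
-- both functions are `f`.
lemma exists_eqOn_ball_of_eventually_eq (hr : ∀ c ∈ I, 0 < r c) (hI : ∀ c ∈ I, ball c (r c) ⊆ I)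
    (hG : ∀ c ∈ I, DifferentiableOn ℂ (G c) (ball (c : ℂ) (r c)))
    (hGf : ∀ c ∈ I, ∀ᶠ t : ℝ in 𝓝 c, G c t = f t) :
    ∃ F : ℂ → ℂ, ∀ c ∈ I, EqOn F (G c) (ball (c : ℂ) (r c)) := by
  have hagree {c c' : ℝ} (hc : c ∈ I) (hc' : c' ∈ I) :
      EqOn (G c) (G c') (ball (c : ℂ) (r c) ∩ ball (c' : ℂ) (r c')) := by
    rintro z ⟨hz, hz'⟩
    have hre := re_mem_ball_of_mem_ball_ofReal hz
    have hre' := re_mem_ball_of_mem_ball_ofReal hz'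
    refine eqOn_of_eventually_eq_ofReal (isOpen_ball.inter isOpen_ball)
      ((convex_ball _ _).inter (convex_ball _ _)).isPreconnected
      ((hG c hc).mono inter_subset_left) ((hG c' hc').mono inter_subset_right)
      (x := z.re) ⟨?_, ?_⟩ ?_ ⟨hz, hz'⟩
    · rwa [mem_ball, Complex.isometry_ofReal.dist_eq]
    · rwa [mem_ball, Complex.isometry_ofReal.dist_eq]
    · filter_upwards [isOpen_ball.mem_nhds hre, isOpen_ball.mem_nhds hre'] with t ht ht'
      exact (eqOn_comp_ofReal_ball hr hI hG hGf hc ht).trans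
        (eqOn_comp_ofReal_ball hr hI hG hGf hc' ht').symm
  choose! center hcenter using fun (z : ℂ) (hz : ∃ c ∈ I, z ∈ ball (c : ℂ) (r c)) => hz
  exact ⟨fun z => G (center z) z, fun c hc z hz =>
    hagree (hcenter z ⟨c, hc, hz⟩).1 hc ⟨(hcenter z ⟨c, hc, hz⟩).2, hz⟩⟩

end Gluing

lemma ball_discRadius_subset {c : ℝ} (hc : c ∈ Ioo (0 : ℝ) 1) :
    ball c (discRadius c) ⊆ Ioo 0 1 := by
  have hle : discRadius c ≤ min c (1 - c) :=
    div_le_self (le_min hc.1.le (by linarith [hc.2])) (Real.one_le_sqrt.2 one_le_two)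
  rw [Real.ball_eq_Ioo]
  exact Ioo_subset_Ioo (by linarith [min_le_left c (1 - c)]) (by linarith [min_le_right c (1 - c)])

section Extension

variable {D : ℕ → ℝ → ℂ}

lemma exists_nhds_forall_norm_mul_pow_le
    (hD : ∀ n, ∀ x ∈ Ioo (0 : ℝ) 1, HasDerivAt (D n) (D (n + 1) x) x) (hS : ahsSum D ≠ ⊤)
    {c r : ℝ} (hr : r ∈ Ioo 0 (discRadius c)) :
    ∃ δ > 0, ball c δ ⊆ Ioo 0 1 ∧
      ∃ A : ℝ, ∀ n, ∀ t ∈ ball c δ, ‖D n t‖ * r ^ n ≤ A * n.factorial := by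
  have hlt : r * √2 < min c (1 - c) := (lt_div_iff₀ (by positivity)).1 hr.2
  obtain ⟨ε, hε, hε'⟩ := exists_between hlt
  have hε₀ : 0 < ε := (mul_pos hr.1 (by positivity)).trans hε
  have hεc : ε < c := hε'.trans_le (min_le_left _ _)
  have hεc' : ε < 1 - c := hε'.trans_le (min_le_right _ _)
  obtain ⟨A, hA⟩ := exists_forall_norm_mul_pow_le_of_ahsSum_ne_top hD hS hε₀ (by linarith) hr.1.le
    ((lt_div_iff₀ (by positivity)).2 hε)
  obtain ⟨δ, hδ, hball⟩ := Metric.isOpen_iff.1 (isOpen_Ioo (a := ε) (b := 1 - ε)) c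
    ⟨hεc, by linarith⟩
  exact ⟨δ, hδ, hball.trans (Ioo_subset_Ioo hε₀.le (by linarith)), A,
    fun n t ht => hA n t (hball ht)⟩

lemma exists_holomorphic_extension
    (hD : ∀ n, ∀ x ∈ Ioo (0 : ℝ) 1, HasDerivAt (D n) (D (n + 1) x) x) (hS : ahsSum D ≠ ⊤) :
    ∃ F : ℂ → ℂ, DifferentiableOn ℂ F Omega ∧ (∀ x ∈ Ioo (0 : ℝ) 1, F x = D 0 x) ∧
      ∀ c ∈ Ioo (0 : ℝ) 1, ∀ z ∈ ball (c : ℂ) (discRadius c),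
        HasSum (fun n => D n c / n.factorial * (z - c) ^ n) (F z) := by
  have hcauchy (c : ℝ) : ∀ r ∈ Ioo 0 (discRadius c), ∃ A : ℝ, ∀ n,
      ‖D n c‖ * r ^ n ≤ A * n.factorial := fun r hr => by
    obtain ⟨δ, hδ, -, A, hA⟩ := exists_nhds_forall_norm_mul_pow_le hD hS hr
    exact ⟨A, fun n => hA n c (mem_ball_self hδ)⟩
  have hdiff (c : ℝ) := differentiableOn_taylorSum (hcauchy c) (c : ℂ)
  have hlocal : ∀ c ∈ Ioo (0 : ℝ) 1, ∀ᶠ t : ℝ in 𝓝 c, taylorSum (D · c) c t = D 0 t := by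
    intro c hc
    obtain ⟨r, hr⟩ := nonempty_Ioo.2 (discRadius_pos hc)
    obtain ⟨δ, hδ, hδI, A, hA⟩ := exists_nhds_forall_norm_mul_pow_le hD hS hr
    filter_upwards [ball_mem_nhds c hδ, ball_mem_nhds c hr.1] with t htδ htr
    have htaylor := tendsto_sum_pow_smul (convex_ball c δ) (fun n x hx => hD n x (hδI hx)) hA
      (mem_ball_self hδ) htδ htr
    have hmem : (t : ℂ) ∈ ball (c : ℂ) (discRadius c) := by
      rw [mem_ball, Complex.isometry_ofReal.dist_eq]
      exact (mem_ball.1 htr).trans hr.2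
    refine tendsto_nhds_unique (hasSum_taylorSum (hcauchy c) hmem).tendsto_sum_nat
      (htaylor.congr fun n => Finset.sum_congr rfl fun k _ => ?_)
    rw [Complex.real_smul]
    push_cast
    ring
  obtain ⟨F, hF⟩ := exists_eqOn_ball_of_eventually_eq (fun c => discRadius_pos)
    (fun c => ball_discRadius_subset) (fun c _ => hdiff c) hlocal
  refine ⟨F, fun z hz => ?_, fun x hx => ?_, fun c hc z hz => ?_⟩
  · obtain ⟨c, hc, hz⟩ := mem_Omega_iff.1 hz
    exact (((hdiff c).congr (hF c hc)).differentiableAt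
      (isOpen_ball.mem_nhds hz)).differentiableWithinAt
  · rw [hF x hx (mem_ball_self (discRadius_pos hx)), (hlocal x hx).self_of_nhds]
  · rw [hF c hc hz]
    exact hasSum_taylorSum (hcauchy c) hz

end Extension

lemma hasDerivAt_iteratedDerivWithin {𝕜 E : Type*} [NontriviallyNormedField 𝕜]
    [NormedAddCommGroup E] [NormedSpace 𝕜 E] {f : 𝕜 → E} {s : Set 𝕜} (hs : IsOpen s)
    (hf : ContDiffOn 𝕜 (⊤ : ℕ∞) f s) (n : ℕ) {x : 𝕜} (hx : x ∈ s) :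
    HasDerivAt (iteratedDerivWithin n f s) (iteratedDerivWithin (n + 1) f s x) x := by
  have hdiff : DifferentiableOn 𝕜 (iteratedDerivWithin n f s) s :=
    hf.differentiableOn_iteratedDerivWithin (by exact_mod_cast ENat.natCast_lt_top n)
      hs.uniqueDiffOn
  rw [iteratedDerivWithin_succ]
  exact (hdiff x hx).hasDerivWithinAt.hasDerivAt (hs.mem_nhds hx)

theorem ahs_lower_bound_OmegaQ_general (q : ℝ) (hq : q < 8) :
    ∃ C : ℝ, 0 < C ∧
      ∀ f : ℝ → ℂ, ContDiffOn ℝ (⊤ : ℕ∞) f (Ioo 0 1) →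
        (∑' n : ℕ, ENNReal.ofReal (2 ^ n / ((2 * n + 1).factorial : ℝ)) *
            ∫⁻ x in Ioo (0 : ℝ) (1 / 2), ENNReal.ofReal (x ^ (2 * n + 1)) *
              (‖iteratedDerivWithin n f (Ioo 0 1) x‖ₑ ^ 2 +
                ‖iteratedDerivWithin n f (Ioo 0 1) (1 - x)‖ₑ ^ 2)) < ⊤ →
        ∃ F : ℂ → ℂ, DifferentiableOn ℂ F Omega ∧
          (∀ x ∈ Ioo (0 : ℝ) 1, F (x : ℂ) = f x) ∧
          ENNReal.ofReal C * ∫⁻ z in OmegaQ q, ‖F z‖ₑ ^ 2 ≤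
            ∑' n : ℕ, ENNReal.ofReal (2 ^ n / ((2 * n + 1).factorial : ℝ)) *
              ∫⁻ x in Ioo (0 : ℝ) (1 / 2), ENNReal.ofReal (x ^ (2 * n + 1)) *
                (‖iteratedDerivWithin n f (Ioo 0 1) x‖ₑ ^ 2 +
                  ‖iteratedDerivWithin n f (Ioo 0 1) (1 - x)‖ₑ ^ 2) := by
  refine ⟨chordFraction q / Real.pi, div_pos (chordFraction_pos hq) Real.pi_pos, fun f hf hS => ?_⟩
  set D : ℕ → ℝ → ℂ := fun n => iteratedDerivWithin n f (Ioo 0 1)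
  have hD (n : ℕ) (x : ℝ) (hx : x ∈ Ioo 0 1) : HasDerivAt (D n) (D (n + 1) x) x :=
    hasDerivAt_iteratedDerivWithin isOpen_Ioo hf n hx
  have hsum := ahsSum_eq_tsum fun n x hx => (hD n x hx).continuousAt.continuousWithinAt
  rw [← hsum] at hS
  obtain ⟨F, hF, hFf, hTaylor⟩ := exists_holomorphic_extension hD hS.ne
  refine ⟨F, hF, fun x hx => (hFf x hx).trans (congrFun iteratedDerivWithin_zero x), ?_⟩
  rw [← hsum]
  exact mul_lintegral_OmegaQ_le hq hF.continuousOn hTaylor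

/-- For each `q ∈ (0,8)` there is `C_q > 0` such that any smooth `f` on `(0,1)` with finite
(AHS)-type sum `S` extends holomorphically to `Ω`, with `C_q ∫_{Ω_q} |F|² ≤ S`. -/
theorem ahs_lower_bound_OmegaQ (q : ℝ) (hq : q ∈ Ioo (0 : ℝ) 8) :
    ∃ C : ℝ, 0 < C ∧
      ∀ f : ℝ → ℂ, ContDiffOn ℝ (⊤ : ℕ∞) f (Ioo 0 1) →
        (∑' n : ℕ, ENNReal.ofReal ((2 : ℝ) ^ n / (Nat.factorial (2 * n + 1) : ℝ)) *
            ∫⁻ x in Ioo (0 : ℝ) (1 / 2),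
              ENNReal.ofReal (x ^ (2 * n + 1)) *
                ((‖iteratedDerivWithin n f (Ioo 0 1) x‖₊ : ℝ≥0∞) ^ 2 +
                  (‖iteratedDerivWithin n f (Ioo 0 1) (1 - x)‖₊ : ℝ≥0∞) ^ 2) ∂volume) < ⊤ →
        ∃ F : ℂ → ℂ, DifferentiableOn ℂ F Omega ∧
          (∀ x ∈ Ioo (0 : ℝ) 1, F (x : ℂ) = f x) ∧
          ENNReal.ofReal C * ∫⁻ z in OmegaQ q, (‖F z‖₊ : ℝ≥0∞) ^ 2 ∂volume ≤
            ∑' n : ℕ, ENNReal.ofReal ((2 : ℝ) ^ n / (Nat.factorial (2 * n + 1) : ℝ)) *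
              ∫⁻ x in Ioo (0 : ℝ) (1 / 2),
                ENNReal.ofReal (x ^ (2 * n + 1)) *
                  ((‖iteratedDerivWithin n f (Ioo 0 1) x‖₊ : ℝ≥0∞) ^ 2 +
                    (‖iteratedDerivWithin n f (Ioo 0 1) (1 - x)‖₊ : ℝ≥0∞) ^ 2) ∂volume :=
  ahs_lower_bound_OmegaQ_general q hq.2
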